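/- Let γ ∈ ℝ be a finite corner of the min-plus characteristic polynomial P_A, and let a^{(γ)} = a_0^{G_0} + X a_1^{G_1} + ⋯ + X^d a_d^{G_d} be the auxiliary pencil built with the graphs G_k = Opt_k(γ). If the polynomial det(a^{(γ)}) ∈ ℂ[X] has nonzero roots λ_1, …, λ_m, listed with multiplicity, then there exist ε₀ > 0 and functions L_1, …, L_m : (0, ε₀) → ℂ such that for every ε ∈ (0, ε₀) the multiset {L_1(ε), …, L_m(ε)} is a sub-multiset of the multiset of roots of det(𝒜_ε) (counted with multiplicity), and ε^{−γ} L_i(ε) → λ_i as ε → 0⁺ for every i = 1, …, m; in other words, the pencil 𝒜_ε has m eigenvalues with respective asymptotic equivalents λ_i ε^γ. -/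

import Mathlib

open Polynomial Filter Topology Finset

noncomputable section

/-- The min-plus semiring `ℝ ∪ {+∞}`, with `min` as addition and `+` as
multiplication (so `⊤ = +∞` is the min-plus zero `𝟘`). -/
abbrev Rmin := WithTop ℝ

/-- Min-plus permanent of a matrix: `perm B = min_σ Σ_i B_{i σ(i)}`. -/
def mpPerm {n : ℕ} (B : Matrix (Fin n) (Fin n) Rmin) : Rmin :=
  Finset.univ.inf fun σ : Equiv.Perm (Fin n) => ∑ i, B i (σ i)

/-- Coefficient of `X^m` in the min-plus characteristic polynomial
`P_A = perm (A_0 ⊕ X A_1 ⊕ ⋯ ⊕ X^d A_d)`: expanding the min-plus permanent of the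
pencil, the coefficient of `X^m` is the min over permutations `σ` and over
exponent choices `κ : Fin n → Fin (d+1)` with `Σ_i κ i = m` of `Σ_i (A_{κ i})_{i σ(i)}`. -/
def PAcoeff {n d : ℕ} (A : Fin (d + 1) → Matrix (Fin n) (Fin n) Rmin) (m : ℕ) : Rmin :=
  Finset.univ.inf fun σ : Equiv.Perm (Fin n) =>
    (Finset.univ.filter fun κ : Fin n → Fin (d + 1) => ∑ i, (κ i : ℕ) = m).inf
      fun κ => ∑ i, A (κ i) i (σ i)

/-- The polynomial function `P̂_A(γ) = min_m (P_m + m γ)` associated with the formal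
min-plus characteristic polynomial `P_A` (whose degree is at most `n * d`). -/
def PAhat {n d : ℕ} (A : Fin (d + 1) → Matrix (Fin n) (Fin n) Rmin) (γ : ℝ) : Rmin :=
  (Finset.range (n * d + 1)).inf fun m => PAcoeff A m + (((m : ℝ) * γ : ℝ) : Rmin)

/-- The set of exponents `m` achieving the minimum in `P̂_A(γ)` with a finite
coefficient (the "active" slopes of the concave piecewise linear function `P̂_A` at `γ`). -/
def activeSet {n d : ℕ} (A : Fin (d + 1) → Matrix (Fin n) (Fin n) Rmin) (γ : ℝ) : Finset ℕ :=
  (Finset.range (n * d + 1)).filter fun m =>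
    PAcoeff A m ≠ ⊤ ∧ PAcoeff A m + (((m : ℝ) * γ : ℝ) : Rmin) = PAhat A γ

/-- `γ ∈ ℝ` is a finite corner of `P_A` iff the piecewise linear concave function `P̂_A`
is not differentiable at `γ`, i.e. at least two distinct slopes are active at `γ`. -/
def IsFiniteCorner {n d : ℕ} (A : Fin (d + 1) → Matrix (Fin n) (Fin n) Rmin) (γ : ℝ) : Prop :=
  ∃ m₁ ∈ activeSet A γ, ∃ m₂ ∈ activeSet A γ, m₁ ≠ m₂

/-- Multiplicity of a finite corner `γ`: `P̂_A'(γ⁻) - P̂_A'(γ⁺)`, i.e. the largest active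
slope minus the smallest active slope at `γ`. -/
def cornerMult {n d : ℕ} (A : Fin (d + 1) → Matrix (Fin n) (Fin n) Rmin) (γ : ℝ) : ℕ :=
  (activeSet A γ).sup id - ((activeSet A γ).min).getD 0

/-- Valuation of `P_A`: smallest `k` whose coefficient is `≠ 𝟘`; this is the
multiplicity of the corner `𝟘 = +∞`. -/
def PAval {n d : ℕ} (A : Fin (d + 1) → Matrix (Fin n) (Fin n) Rmin) : ℕ :=
  sInf {m | PAcoeff A m ≠ ⊤}

/-- Degree of `P_A`: largest `k` whose coefficient is `≠ 𝟘`. -/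
def PAdeg {n d : ℕ} (A : Fin (d + 1) → Matrix (Fin n) (Fin n) Rmin) : ℕ :=
  sSup {m | PAcoeff A m ≠ ⊤}

/-- The matrix `Â(γ)`, with entries `Â_{ij}(γ) = min_{0 ≤ k ≤ d} ((A_k)_{ij} + k γ)`. -/
def AhatMat {n d : ℕ} (A : Fin (d + 1) → Matrix (Fin n) (Fin n) Rmin) (γ : ℝ) :
    Matrix (Fin n) (Fin n) Rmin :=
  fun i j => Finset.univ.inf fun k : Fin (d + 1) => A k i j + ((((k : ℕ) : ℝ) * γ : ℝ) : Rmin)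

/-- `(i,j)` is an arc of the digraph `Opt(B)` of arcs belonging to optimal assignments. -/
def OptArc {n : ℕ} (B : Matrix (Fin n) (Fin n) Rmin) (i j : Fin n) : Prop :=
  ∃ σ : Equiv.Perm (Fin n), σ i = j ∧ (∑ l, B l (σ l)) = mpPerm B

/-- `(i,j)` is an arc of the digraph `Opt_k(γ)`. -/
def OptK {n d : ℕ} (A : Fin (d + 1) → Matrix (Fin n) (Fin n) Rmin) (γ : ℝ)
    (k : Fin (d + 1)) (i j : Fin n) : Prop :=
  OptArc (AhatMat A γ) i j ∧ A k i j + ((((k : ℕ) : ℝ) * γ : ℝ) : Rmin) = AhatMat A γ i j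

/-- `(U, V)` is a Hungarian pair with respect to `B`. -/
def HungarianPair {n : ℕ} (B : Matrix (Fin n) (Fin n) Rmin) (U V : Fin n → ℝ) : Prop :=
  (∀ i j, ((U i + V j : ℝ) : Rmin) ≤ B i j) ∧
    (((∑ i, U i) + ∑ j, V j : ℝ) : Rmin) = mpPerm B

/-- `(i,j)` is an arc of the saturation graph `Sat(B,U,V)`. -/
def SatArc {n : ℕ} (B : Matrix (Fin n) (Fin n) Rmin) (U V : Fin n → ℝ) (i j : Fin n) : Prop :=
  B i j = ((U i + V j : ℝ) : Rmin)

/-- `(i,j)` is an arc of the digraph `Sat_k(γ, U, V)`. -/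
def SatK {n d : ℕ} (A : Fin (d + 1) → Matrix (Fin n) (Fin n) Rmin) (γ : ℝ)
    (U V : Fin n → ℝ) (k : Fin (d + 1)) (i j : Fin n) : Prop :=
  SatArc (AhatMat A γ) U V i j ∧
    A k i j + ((((k : ℕ) : ℝ) * γ : ℝ) : Rmin) = AhatMat A γ i j

open Classical in
/-- `b^G` : keep the entries of `b` on the arcs of the digraph `G`, set others to `0`. -/
def restrictG {n : ℕ} (b : Matrix (Fin n) (Fin n) ℂ) (G : Fin n → Fin n → Prop) :
    Matrix (Fin n) (Fin n) ℂ :=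
  fun i j => if G i j then b i j else 0

/-- The auxiliary pencil `a^{(γ)} = a_0^{G_0} + X a_1^{G_1} + ⋯ + X^d a_d^{G_d}`
built from digraphs `G_0, …, G_d`, as a matrix of polynomials in `ℂ[X]`. -/
def auxPencil {n d : ℕ} (a : Fin (d + 1) → Matrix (Fin n) (Fin n) ℂ)
    (G : Fin (d + 1) → Fin n → Fin n → Prop) : Matrix (Fin n) (Fin n) (Polynomial ℂ) :=
  fun i j => ∑ k : Fin (d + 1), Polynomial.C (restrictG (a k) (G k) i j) * X ^ (k : ℕ)

/-- The polynomial `det 𝒜_ε ∈ ℂ[X]` of the perturbed pencil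
`𝒜_ε = 𝒜_{ε,0} + X 𝒜_{ε,1} + ⋯ + X^d 𝒜_{ε,d}`, whose roots are the eigenvalues. -/
def pencilPoly {n d : ℕ} (𝒜 : ℝ → Fin (d + 1) → Matrix (Fin n) (Fin n) ℂ) (ε : ℝ) :
    Polynomial ℂ :=
  Matrix.det fun i j => ∑ k : Fin (d + 1), Polynomial.C (𝒜 ε k i j) * X ^ (k : ℕ)

/-- The perturbed pencil `𝒜_ε` has the asymptotics given by `(a_k, A_k)`:
`(𝒜_{ε,k})_{ij} = (a_k)_{ij} ε^{(A_k)_{ij}} + o(ε^{(A_k)_{ij}})` as `ε → 0⁺`,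
where `(A_k)_{ij} = +∞` means that the entry vanishes in a neighborhood of `0`. -/
def HasAsymptotics {n d : ℕ} (𝒜 : ℝ → Fin (d + 1) → Matrix (Fin n) (Fin n) ℂ)
    (a : Fin (d + 1) → Matrix (Fin n) (Fin n) ℂ)
    (A : Fin (d + 1) → Matrix (Fin n) (Fin n) Rmin) : Prop :=
  ∀ k i j,
    (A k i j = ⊤ → ∀ᶠ ε in 𝓝[>] (0 : ℝ), 𝒜 ε k i j = 0) ∧
    (∀ t : ℝ, A k i j = (t : Rmin) →
      (fun ε : ℝ => 𝒜 ε k i j - a k i j * ((ε ^ t : ℝ) : ℂ)) =o[𝓝[>] (0 : ℝ)]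
        fun ε : ℝ => (ε ^ t : ℝ))

/-- If every arc of `σ` lies on a permutation of weight `c`, where `c` is a lower bound for the
weights of the permutations supported by `F`, then `σ` has weight at most `c`. -/
lemma sum_le_of_arcs_mem_optimal {n : ℕ} (hn : 1 ≤ n) (b : Fin n → Fin n → ℝ)
    (F : Fin n → Fin n → Prop) (c : ℝ)
    (hc : ∀ ρ : Equiv.Perm (Fin n), (∀ i, F i (ρ i)) → c ≤ ∑ i, b i (ρ i))
    (σ : Equiv.Perm (Fin n)) (τ : Fin n → Equiv.Perm (Fin n)) (hτ : ∀ i, τ i i = σ i)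
    (hF : ∀ i l, F l (τ i l)) (hτc : ∀ i, ∑ l, b l (τ i l) = c) :
    ∑ i, b i (σ i) ≤ c := by
  classical
  have hn0 : (0 : ℝ) < n := by exact_mod_cast hn
  let z : Fin n := ⟨0, hn⟩
  let M : Matrix (Fin n) (Fin n) ℝ := fun i j =>
    (n : ℝ)⁻¹ * ((if τ z i = j then 1 else 0) + (∑ l, if τ l i = j then 1 else 0)
      - if σ i = j then 1 else 0)
  have hcol (ρ : Equiv.Perm (Fin n)) (j : Fin n) : (∑ i, if ρ i = j then (1 : ℝ) else 0) = 1 := by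
    simp [← Equiv.eq_symm_apply]
  have hσle (i j : Fin n) :
      (if σ i = j then (1 : ℝ) else 0) ≤ ∑ l, if τ l i = j then (1 : ℝ) else 0 := by
    rw [← hτ i]
    exact Finset.single_le_sum (f := fun l => if τ l i = j then (1 : ℝ) else 0)
      (fun l _ => by split_ifs <;> norm_num) (Finset.mem_univ i)
  have hM : M ∈ doublyStochastic ℝ (Fin n) := by
    rw [mem_doublyStochastic_iff_sum]
    refine ⟨fun i j => ?_, fun i => ?_, fun j => ?_⟩
    · refine mul_nonneg (by positivity) ?_
      have h1 : (0 : ℝ) ≤ if τ z i = j then 1 else 0 := by split_ifs <;> norm_num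
      linarith [hσle i j]
    · simp only [M]
      rw [← Finset.mul_sum, Finset.sum_sub_distrib, Finset.sum_add_distrib, Finset.sum_comm]
      simp [hn0.ne']
    · simp only [M]
      rw [← Finset.mul_sum, Finset.sum_sub_distrib, Finset.sum_add_distrib, Finset.sum_comm]
      simp [hcol, hn0.ne']
  obtain ⟨w, hw0, hw1, hwM⟩ := exists_eq_sum_perm_of_mem_doublyStochastic hM
  have hwM' (i j : Fin n) : M i j = ∑ ρ, w ρ * if ρ i = j then 1 else 0 := by
    rw [← hwM]
    simp [Matrix.sum_apply, PEquiv.toMatrix_apply, Equiv.toPEquiv_apply]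
  have hsupp (ρ : Equiv.Perm (Fin n)) (hρ : w ρ ≠ 0) (i : Fin n) : F i (ρ i) := by
    by_contra hFi
    have hne (l : Fin n) : τ l i ≠ ρ i := fun h => hFi (h ▸ hF l i)
    have hneσ : σ i ≠ ρ i := hτ i ▸ hne i
    have h0 : M i (ρ i) = 0 := by simp [M, hne, hneσ]
    have h1 : w ρ * (if ρ i = ρ i then 1 else 0) ≤ M i (ρ i) := by
      rw [hwM']
      exact Finset.single_le_sum (f := fun ρ' : Equiv.Perm (Fin n) =>
          w ρ' * if ρ' i = ρ i then (1 : ℝ) else 0)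
        (fun ρ' _ => mul_nonneg (hw0 ρ') (by split_ifs <;> norm_num)) (Finset.mem_univ ρ)
    rw [h0, if_pos rfl, mul_one] at h1
    exact hρ (le_antisymm h1 (hw0 ρ))
  have hperm (ρ : Equiv.Perm (Fin n)) :
      ∑ i, ∑ j, b i j * (if ρ i = j then 1 else 0) = ∑ i, b i (ρ i) := by simp
  have hφ1 : ∑ i, ∑ j, b i j * M i j = ∑ ρ : Equiv.Perm (Fin n), w ρ * ∑ i, b i (ρ i) := by
    simp_rw [hwM', ← hperm, Finset.mul_sum]
    rw [Finset.sum_congr rfl fun i _ => Finset.sum_comm, Finset.sum_comm]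
    refine Finset.sum_congr rfl fun ρ _ => Finset.sum_congr rfl fun i _ =>
      Finset.sum_congr rfl fun j _ => by ring
  have hφ2 : ∑ i, ∑ j, b i j * M i j = (n : ℝ)⁻¹ * (c + n * c - ∑ i, b i (σ i)) := by
    have h1 : ∑ i, ∑ j, b i j * (∑ l, if τ l i = j then (1 : ℝ) else 0) = n * c := by
      simp_rw [Finset.mul_sum]
      rw [Finset.sum_congr rfl fun i _ => Finset.sum_comm, Finset.sum_comm]
      simp [hτc]
    rw [← h1, ← hperm σ, ← hτc z, ← hperm (τ z)]
    simp only [← Finset.sum_add_distrib, ← Finset.sum_sub_distrib, Finset.mul_sum (a := (n : ℝ)⁻¹)]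
    refine Finset.sum_congr rfl fun i _ => Finset.sum_congr rfl fun j _ => ?_
    simp only [M]
    ring
  have hge : c ≤ ∑ ρ : Equiv.Perm (Fin n), w ρ * ∑ i, b i (ρ i) := by
    calc c = ∑ ρ : Equiv.Perm (Fin n), w ρ * c := by rw [← Finset.sum_mul, hw1, one_mul]
      _ ≤ _ := Finset.sum_le_sum fun ρ _ => by
        by_cases h : w ρ = 0
        · simp [h]
        · exact mul_le_mul_of_nonneg_left (hc ρ (hsupp ρ h)) (hw0 ρ)
  rw [← hφ1, hφ2, inv_mul_eq_div, le_div_iff₀ hn0] at hge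
  linarith

/-- A permutation all of whose arcs belong to optimal assignments is optimal. -/
lemma sum_eq_mpPerm_of_optArc {n : ℕ} (hn : 1 ≤ n) (B : Matrix (Fin n) (Fin n) Rmin)
    (hB : mpPerm B ≠ ⊤) (σ : Equiv.Perm (Fin n)) (hσ : ∀ i, OptArc B i (σ i)) :
    ∑ i, B i (σ i) = mpPerm B := by
  choose τ hτ hτB using hσ
  have hfin (i l : Fin n) : B l (τ i l) ≠ ⊤ := by
    have h := hτB i ▸ hB
    rw [WithTop.sum_ne_top] at h
    exact h l (Finset.mem_univ l)
  have hcoe (ρ : Equiv.Perm (Fin n)) (hρ : ∀ i, B i (ρ i) ≠ ⊤) :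
      ((∑ i, (B i (ρ i)).untopD 0 : ℝ) : Rmin) = ∑ i, B i (ρ i) := by
    rw [WithTop.coe_sum]
    exact Finset.sum_congr rfl fun i _ => by
      obtain ⟨x, hx⟩ := WithTop.ne_top_iff_exists.1 (hρ i)
      rw [← hx, WithTop.untopD_coe]
  obtain ⟨c, hc⟩ := WithTop.ne_top_iff_exists.1 hB
  have hle (ρ : Equiv.Perm (Fin n)) : mpPerm B ≤ ∑ i, B i (ρ i) :=
    Finset.inf_le (f := fun ρ : Equiv.Perm (Fin n) => ∑ i, B i (ρ i)) (Finset.mem_univ ρ)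
  refine le_antisymm ?_ (hle σ)
  have hσfin (i : Fin n) : B i (σ i) ≠ ⊤ := hτ i ▸ hfin i i
  rw [← hcoe σ hσfin, ← hc, WithTop.coe_le_coe]
  refine sum_le_of_arcs_mem_optimal hn (fun i j => (B i j).untopD 0) (fun i j => B i j ≠ ⊤) c
    (fun ρ hρ => ?_) σ τ hτ hfin fun i => ?_
  · rw [← WithTop.coe_le_coe, hcoe ρ hρ, hc]
    exact hle ρ
  · rw [← WithTop.coe_inj, hcoe (τ i) (hfin i), hτB, hc]

lemma mpPerm_AhatMat_ne_top {n d : ℕ} (A : Fin (d + 1) → Matrix (Fin n) (Fin n) Rmin) (γ : ℝ)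
    {m : ℕ} (hm : PAcoeff A m ≠ ⊤) : mpPerm (AhatMat A γ) ≠ ⊤ := by
  contrapose! hm
  rw [mpPerm, Finset.inf_eq_top_iff] at hm
  rw [PAcoeff, Finset.inf_eq_top_iff]
  intro σ hσ
  rw [Finset.inf_eq_top_iff]
  intro κ _
  obtain ⟨i, hi, htop⟩ := (WithTop.sum_eq_top).1 (hm σ hσ)
  rw [AhatMat, Finset.inf_eq_top_iff] at htop
  refine WithTop.sum_eq_top.2 ⟨i, hi, ?_⟩
  exact (WithTop.add_eq_top.1 (htop (κ i) (Finset.mem_univ _))).resolve_right WithTop.coe_ne_top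

/-- If `p μ` is much larger than `p z`, then `p` has a root at distance less than `δ` of `z`, for
any `δ ≥ |μ - z|`. -/
lemma exists_root_dist_lt (p : ℂ[X]) {N : ℕ} (hN : p.natDegree ≤ N) {z μ : ℂ} {δ : ℝ}
    (hμ : ‖μ - z‖ ≤ δ) (h : 2 ^ N * ‖p.eval z‖ < ‖p.eval μ‖) :
    ∃ r ∈ p.roots, ‖r - z‖ < δ := by
  by_contra! hr
  have heval (x : ℂ) : p.eval x = p.leadingCoeff * (p.roots.map fun r => x - r).prod := by
    conv_lhs => rw [(IsAlgClosed.splits p).eq_prod_roots]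
    simp [eval_multiset_prod, Multiset.map_map]
  have key (s : Multiset ℂ) (hs : ∀ r ∈ s, δ ≤ ‖r - z‖) :
      ‖(s.map fun r => μ - r).prod‖ ≤ 2 ^ s.card * ‖(s.map fun r => z - r).prod‖ := by
    induction s using Multiset.induction_on with
    | empty => simp
    | cons r s ih =>
      have ih := ih fun r hr => hs r (Multiset.mem_cons_of_mem hr)
      have hδ := hs r (Multiset.mem_cons_self r s)
      have h1 : ‖μ - r‖ ≤ 2 * ‖z - r‖ := by
        have h2 := norm_add_le (μ - z) (z - r)
        rw [sub_add_sub_cancel] at h2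
        rw [norm_sub_rev] at hδ
        linarith
      simp only [Multiset.map_cons, Multiset.prod_cons, norm_mul, Multiset.card_cons]
      calc ‖μ - r‖ * ‖(s.map fun r => μ - r).prod‖
          ≤ (2 * ‖z - r‖) * (2 ^ s.card * ‖(s.map fun r => z - r).prod‖) := by gcongr
        _ = _ := by ring
  have hcard : p.roots.card ≤ N := (card_roots' p).trans hN
  refine h.not_ge ?_
  rw [heval z, heval μ, norm_mul, norm_mul]
  calc ‖p.leadingCoeff‖ * ‖(p.roots.map fun r => μ - r).prod‖
      ≤ ‖p.leadingCoeff‖ * (2 ^ p.roots.card * ‖(p.roots.map fun r => z - r).prod‖) := by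
        gcongr; exact key _ hr
    _ ≤ ‖p.leadingCoeff‖ * (2 ^ N * ‖(p.roots.map fun r => z - r).prod‖) := by
        gcongr; norm_num
    _ = _ := by ring

/-- Coefficientwise convergence of a family of polynomials. -/
def TendstoCoeff {ι : Type*} (l : Filter ι) (f : ι → ℂ[X]) (g : ℂ[X]) : Prop :=
  ∀ k, Tendsto (fun x => (f x).coeff k) l (𝓝 (g.coeff k))

namespace TendstoCoeff

variable {ι α : Type*} {l : Filter ι}

lemma congr' {f f' : ι → ℂ[X]} {g : ℂ[X]} (h : TendstoCoeff l f g) (hff : f =ᶠ[l] f') :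
    TendstoCoeff l f' g :=
  fun k => (h k).congr' (hff.mono fun _ hx => by simp only [hx])

lemma const (g : ℂ[X]) : TendstoCoeff l (fun _ => g) g := fun _ => tendsto_const_nhds

lemma C {f : ι → ℂ} {c : ℂ} (h : Tendsto f l (𝓝 c)) :
    TendstoCoeff l (fun x => Polynomial.C (f x)) (Polynomial.C c) := fun k => by
  simp only [coeff_C]
  split_ifs
  exacts [h, tendsto_const_nhds]

lemma mul {f f' : ι → ℂ[X]} {g g' : ℂ[X]} (h : TendstoCoeff l f g) (h' : TendstoCoeff l f' g') :
    TendstoCoeff l (fun x => f x * f' x) (g * g') := fun k => by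
  simp only [coeff_mul]
  exact tendsto_finsetSum _ fun p _ => (h p.1).mul (h' p.2)

lemma sum (s : Finset α) {f : α → ι → ℂ[X]} {g : α → ℂ[X]}
    (h : ∀ i ∈ s, TendstoCoeff l (f i) (g i)) :
    TendstoCoeff l (fun x => ∑ i ∈ s, f i x) (∑ i ∈ s, g i) := fun k => by
  simp only [finsetSum_coeff]
  exact tendsto_finsetSum _ fun i hi => h i hi k

lemma prod (s : Finset α) {f : α → ι → ℂ[X]} {g : α → ℂ[X]}
    (h : ∀ i ∈ s, TendstoCoeff l (f i) (g i)) :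
    TendstoCoeff l (fun x => ∏ i ∈ s, f i x) (∏ i ∈ s, g i) := by
  classical
  induction s using Finset.induction_on with
  | empty => simpa using const 1
  | insert i s hi ih =>
    simp only [Finset.prod_insert hi]
    exact (h i (Finset.mem_insert_self i s)).mul
      (ih fun j hj => h j (Finset.mem_insert_of_mem hj))

variable {f : ι → ℂ[X]} {g : ℂ[X]} {N : ℕ}

lemma eval (h : TendstoCoeff l f g) (hf : ∀ x, (f x).natDegree ≤ N) (hg : g.natDegree ≤ N)
    (z : ℂ) : Tendsto (fun x => (f x).eval z) l (𝓝 (g.eval z)) := by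
  simp only [eval_eq_sum_range' (Nat.lt_succ_of_le hg),
    fun x => eval_eq_sum_range' (Nat.lt_succ_of_le (hf x)) z]
  exact tendsto_finsetSum _ fun i _ => (h i).mul_const _

lemma divByMonic (h : TendstoCoeff l f g) (hf : ∀ x, (f x).natDegree ≤ N)
    (hg : g.natDegree ≤ N) {L : ι → ℂ} {z : ℂ} (hL : Tendsto L l (𝓝 z)) :
    TendstoCoeff l (fun x => f x /ₘ (X - Polynomial.C (L x))) (g /ₘ (X - Polynomial.C z)) := by
  have key (p : ℂ[X]) (hp : p.natDegree ≤ N) (a : ℂ) (k : ℕ) :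
      (p /ₘ (X - Polynomial.C a)).coeff k =
        ∑ i ∈ Finset.Icc (k + 1) N, a ^ (i - (k + 1)) * p.coeff i := by
    rw [coeff_divByMonic_X_sub_C]
    refine Finset.sum_subset (Finset.Icc_subset_Icc_right hp) fun i hi hi' => ?_
    rw [coeff_eq_zero_of_natDegree_lt, mul_zero]
    simp only [Finset.mem_Icc] at hi hi'
    omega
  intro k
  simp only [key _ hg, fun x => key _ (hf x)]
  exact tendsto_finsetSum _ fun i _ => (hL.pow _).mul (h i)

lemma eventually_ne_zero (h : TendstoCoeff l f g) (hg0 : g ≠ 0) : ∀ᶠ x in l, f x ≠ 0 := by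
  have hlc : g.coeff g.natDegree ≠ 0 := leadingCoeff_ne_zero.2 hg0
  filter_upwards [(h g.natDegree).eventually_ne hlc] with x hx h0
  exact hx (by simp [h0])

/-- A root of a nonzero limit of polynomials of bounded degree is a limit of roots. -/
lemma exists_tendsto_root (h : TendstoCoeff l f g) (hf : ∀ x, (f x).natDegree ≤ N)
    (hg : g.natDegree ≤ N) (hg0 : g ≠ 0) {z : ℂ} (hz : g.IsRoot z) :
    ∃ L : ι → ℂ, (∀ᶠ x in l, L x ∈ (f x).roots) ∧ Tendsto L l (𝓝 z) := by
  classical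
  have hnear (δ : ℝ) (hδ : 0 < δ) : ∀ᶠ x in l, ∃ r ∈ (f x).roots, ‖r - z‖ < δ := by
    obtain ⟨μ, hμ, hμ0⟩ : ∃ μ ∈ Metric.ball z δ, g.eval μ ≠ 0 := by
      by_contra! hall
      refine hg0 (g.eq_zero_of_infinite_isRoot ?_)
      exact (infinite_of_mem_nhds z (Metric.ball_mem_nhds z hδ)).mono hall
    have hlim : Tendsto (fun x => ‖(f x).eval μ‖ - 2 ^ N * ‖(f x).eval z‖) l
        (𝓝 (‖g.eval μ‖ - 2 ^ N * ‖g.eval z‖)) :=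
      (h.eval hf hg μ).norm.sub ((h.eval hf hg z).norm.const_mul _)
    have hpos : 0 < ‖g.eval μ‖ - 2 ^ N * ‖g.eval z‖ := by
      simpa [hz.eq_zero] using hμ0
    filter_upwards [hlim.eventually_const_lt hpos] with x hx
    exact exists_root_dist_lt (f x) (hf x) (mem_ball_iff_norm.1 hμ).le (sub_pos.1 hx)
  have hmin (x : ι) : ∃ y : ℂ, (∃ r, r ∈ (f x).roots) →
      y ∈ (f x).roots ∧ ∀ r ∈ (f x).roots, ‖y - z‖ ≤ ‖r - z‖ := by
    by_cases hne : ∃ r, r ∈ (f x).roots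
    · obtain ⟨y, hy, hy'⟩ := (f x).roots.toFinset.exists_min_image (fun r => ‖r - z‖)
        (by simpa [Finset.Nonempty] using hne)
      exact ⟨y, fun _ => ⟨by simpa using hy, fun r hr => hy' r (by simpa using hr)⟩⟩
    · exact ⟨0, fun h => absurd h hne⟩
  choose L hL using hmin
  refine ⟨L, ?_, ?_⟩
  · filter_upwards [hnear 1 one_pos] with x ⟨r, hr, _⟩
    exact (hL x ⟨r, hr⟩).1
  · rw [Metric.tendsto_nhds]
    intro δ hδ
    filter_upwards [hnear δ hδ] with x ⟨r, hr, hrδ⟩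
    rw [dist_eq_norm]
    exact ((hL x ⟨r, hr⟩).2 r hr).trans_lt hrδ

/-- Roots of a nonzero limit of polynomials of bounded degree are, with multiplicities, limits of
roots. -/
lemma exists_tendsto_roots {m : ℕ} (lam : Fin m → ℂ) (h : TendstoCoeff l f g)
    (hf : ∀ x, (f x).natDegree ≤ N) (hg : g.natDegree ≤ N) (hg0 : g ≠ 0)
    (hlam : Multiset.map lam Finset.univ.val ≤ g.roots) :
    ∃ L : Fin m → ι → ℂ,
      (∀ᶠ x in l, Multiset.map (fun i => L i x) Finset.univ.val ≤ (f x).roots) ∧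
      ∀ i, Tendsto (L i) l (𝓝 (lam i)) := by
  induction m generalizing f g with
  | zero => exact ⟨fun i => i.elim0, by simp, fun i => i.elim0⟩
  | succ m ih =>
    have hcons (v : Fin (m + 1) → ℂ) : Multiset.map v Finset.univ.val =
        v 0 ::ₘ Multiset.map (fun i => v (Fin.succ i)) Finset.univ.val := by
      simp [Fin.univ_succ, Function.comp_def]
    have hroots (p : ℂ[X]) (hp : p ≠ 0) (a : ℂ) (ha : p.IsRoot a) :
        p.roots = a ::ₘ (p /ₘ (X - Polynomial.C a)).roots := by
      have hmul := mul_divByMonic_eq_iff_isRoot.2 ha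
      conv_lhs => rw [← hmul]
      rw [roots_mul (by rwa [hmul]), roots_X_sub_C, Multiset.singleton_add]
    have hdeg (p : ℂ[X]) (hp : p.natDegree ≤ N) (a : ℂ) :
        (p /ₘ (X - Polynomial.C a)).natDegree ≤ N := by
      rw [natDegree_divByMonic _ (monic_X_sub_C a)]
      omega
    rw [hcons] at hlam
    have hroot : g.IsRoot (lam 0) :=
      isRoot_of_mem_roots (Multiset.mem_of_le hlam (Multiset.mem_cons_self _ _))
    obtain ⟨L₀, hL₀, hL₀lim⟩ := h.exists_tendsto_root hf hg hg0 hroot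
    rw [hroots g hg0 _ hroot, Multiset.cons_le_cons_iff] at hlam
    obtain ⟨L, hL, hLlim⟩ := ih (fun i => lam i.succ) (h.divByMonic hf hg hL₀lim)
      (fun x => hdeg _ (hf x) _) (hdeg _ hg _)
      (fun h0 => hg0 (by rw [← mul_divByMonic_eq_iff_isRoot.2 hroot, h0, mul_zero])) hlam
    refine ⟨Fin.cons L₀ L, ?_, Fin.cases hL₀lim hLlim⟩
    filter_upwards [hL₀, hL, h.eventually_ne_zero hg0] with x hx₀ hx hfx
    rw [hcons, hroots (f x) hfx (L₀ x) (isRoot_of_mem_roots hx₀)]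
    exact (Multiset.cons_le_cons_iff _).2 hx

end TendstoCoeff

lemma natDegree_det_le_of_entries {n d : ℕ} (M : Matrix (Fin n) (Fin n) ℂ[X])
    (hM : ∀ i j, (M i j).natDegree ≤ d) : M.det.natDegree ≤ n * d := by
  rw [Matrix.det_apply]
  refine natDegree_sum_le_of_forall_le _ _ fun σ _ => ?_
  refine (natDegree_smul_le _ _).trans ((natDegree_prod_le _ _).trans ?_)
  simpa using Finset.sum_le_card_nsmul Finset.univ (fun i => (M (σ i) i).natDegree) d
    fun i _ => hM _ _

lemma natDegree_sum_C_mul_X_pow_le {d : ℕ} (v : Fin (d + 1) → ℂ) :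
    (∑ k, C (v k) * X ^ (k : ℕ)).natDegree ≤ d :=
  natDegree_sum_le_of_forall_le _ _ fun k _ =>
    (natDegree_C_mul_X_pow_le _ _).trans (Nat.lt_succ_iff.1 k.2)

/-- The power `ε ^ s` tends to `1` or `0` as `ε → 0⁺`, according to whether `s = 0` or `s > 0`. -/
lemma tendsto_rpow_nhdsGT_zero {s : ℝ} (hs : 0 ≤ s) :
    Tendsto (fun ε : ℝ => ((ε ^ s : ℝ) : ℂ)) (𝓝[>] (0 : ℝ)) (𝓝 (if s = 0 then 1 else 0)) := by
  split_ifs with h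
  · simp [h]
  · have hc : ContinuousAt (fun ε : ℝ => ε ^ s) 0 := Real.continuousAt_rpow_const _ _ (Or.inr hs)
    have := (hc.tendsto.mono_left nhdsWithin_le_nhds).ofReal (l := 𝓝[>] (0 : ℝ))
    simpa [Real.zero_rpow h] using this

section Scaling

variable {n d : ℕ} {𝒜 : ℝ → Fin (d + 1) → Matrix (Fin n) (Fin n) ℂ}
  {a : Fin (d + 1) → Matrix (Fin n) (Fin n) ℂ} {A : Fin (d + 1) → Matrix (Fin n) (Fin n) Rmin}

/-- The perturbed pencil after the change of variable `X = ε ^ γ * Y`. -/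
def scaledPencil (𝒜 : ℝ → Fin (d + 1) → Matrix (Fin n) (Fin n) ℂ) (γ ε : ℝ) :
    Matrix (Fin n) (Fin n) ℂ[X] :=
  fun i j => ∑ k : Fin (d + 1), C (𝒜 ε k i j * ((ε ^ γ : ℝ) : ℂ) ^ (k : ℕ)) * X ^ (k : ℕ)

lemma pencilPoly_comp (γ ε : ℝ) :
    (pencilPoly 𝒜 ε).comp (C ((ε ^ γ : ℝ) : ℂ) * X) = (scaledPencil 𝒜 γ ε).det := by
  refine (RingHom.map_det (n := Fin n) (compRingHom (C ((ε ^ γ : ℝ) : ℂ) * X)) _).trans ?_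
  congr 1
  ext1 i j
  change (∑ k : Fin (d + 1), C (𝒜 ε k i j) * X ^ (k : ℕ)).comp _ = _
  simp [scaledPencil, mul_pow, mul_assoc]

/-- Asymptotics of a coefficient of the scaled pencil. -/
lemma tendsto_scaled_coeff (hasym : HasAsymptotics 𝒜 a A) (γ : ℝ) (k : Fin (d + 1)) (i j : Fin n)
    {b : ℝ} (hb : AhatMat A γ i j = (b : Rmin)) [Decidable
      (A k i j + ((((k : ℕ) : ℝ) * γ : ℝ) : Rmin) = AhatMat A γ i j)] :
    Tendsto (fun ε : ℝ => ((ε ^ (-b) : ℝ) : ℂ) * (𝒜 ε k i j * ((ε ^ γ : ℝ) : ℂ) ^ (k : ℕ)))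
      (𝓝[>] (0 : ℝ))
      (𝓝 (if A k i j + ((((k : ℕ) : ℝ) * γ : ℝ) : Rmin) = AhatMat A γ i j
        then a k i j else 0)) := by
  have hle : AhatMat A γ i j ≤ A k i j + ((((k : ℕ) : ℝ) * γ : ℝ) : Rmin) :=
    Finset.inf_le (f := fun k : Fin (d + 1) => A k i j + ((((k : ℕ) : ℝ) * γ : ℝ) : Rmin))
      (Finset.mem_univ k)
  obtain ⟨htop, hfin⟩ := hasym k i j
  by_cases hA : A k i j = ⊤
  · rw [if_neg (by rw [hA, hb, WithTop.top_add]; exact WithTop.top_ne_coe)]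
    refine tendsto_nhds_of_eventually_eq ?_
    filter_upwards [htop hA] with ε hε
    simp [hε]
  · obtain ⟨t, ht⟩ := WithTop.ne_top_iff_exists.1 hA
    replace hA := ht.symm
    have ho := hfin t hA
    rw [hA, hb, ← WithTop.coe_add, WithTop.coe_le_coe] at hle
    have hcond : A k i j + ((((k : ℕ) : ℝ) * γ : ℝ) : Rmin) = AhatMat A γ i j ↔
        t + (k : ℕ) * γ - b = 0 := by
      rw [hA, hb, ← WithTop.coe_add, WithTop.coe_inj, sub_eq_zero]
    have hlim : Tendsto (fun ε : ℝ => 𝒜 ε k i j * ((ε ^ (-t) : ℝ) : ℂ)) (𝓝[>] (0 : ℝ))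
        (𝓝 (a k i j)) := by
      have h0 : Tendsto (fun ε : ℝ =>
          ‖(𝒜 ε k i j - a k i j * ((ε ^ t : ℝ) : ℂ))‖ / ‖(ε ^ t : ℝ)‖) (𝓝[>] (0 : ℝ)) (𝓝 0) :=
        ho.norm_norm.tendsto_div_nhds_zero
      rw [tendsto_iff_norm_sub_tendsto_zero]
      refine h0.congr' ?_
      filter_upwards [self_mem_nhdsWithin] with ε hε
      have hε : (0 : ℝ) < ε := hε
      have hpos : ((ε ^ t : ℝ) : ℂ) ≠ 0 := by exact_mod_cast (Real.rpow_pos_of_pos hε t).ne'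
      rw [← Complex.norm_real (ε ^ t), ← norm_div, Real.rpow_neg hε.le]
      congr 1
      push_cast
      field_simp
    have hprod := hlim.mul (tendsto_rpow_nhdsGT_zero (sub_nonneg.2 hle))
    have hval : (a k i j * if t + (k : ℕ) * γ - b = 0 then 1 else 0) =
        if A k i j + ((((k : ℕ) : ℝ) * γ : ℝ) : Rmin) = AhatMat A γ i j then a k i j else 0 := by
      by_cases h : t + (k : ℕ) * γ - b = 0
      · rw [if_pos h, if_pos (hcond.2 h), mul_one]
      · rw [if_neg h, if_neg fun h' => h (hcond.1 h'), mul_zero]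
    rw [← hval]
    refine hprod.congr' ?_
    filter_upwards [self_mem_nhdsWithin] with ε hε
    have hε : (0 : ℝ) < ε := hε
    have hpow : ε ^ (-t) * ε ^ (t + (k : ℕ) * γ - b) = ε ^ (-b) * (ε ^ γ) ^ (k : ℕ) := by
      rw [← Real.rpow_natCast, ← Real.rpow_mul hε.le, ← Real.rpow_add hε, ← Real.rpow_add hε]
      congr 1
      ring
    rw [mul_assoc, ← Complex.ofReal_mul, hpow]
    push_cast
    ring

open Classical in
/-- Asymptotics of an entry of the scaled pencil. -/
lemma tendstoCoeff_scaledPencil (hasym : HasAsymptotics 𝒜 a A) (γ : ℝ) (i j : Fin n)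
    {b : ℝ} (hb : AhatMat A γ i j = (b : Rmin)) :
    TendstoCoeff (𝓝[>] (0 : ℝ)) (fun ε => C ((ε ^ (-b) : ℝ) : ℂ) * scaledPencil 𝒜 γ ε i j)
      (∑ k : Fin (d + 1), C (if A k i j + ((((k : ℕ) : ℝ) * γ : ℝ) : Rmin) = AhatMat A γ i j
        then a k i j else 0) * X ^ (k : ℕ)) := by
  simp only [scaledPencil, Finset.mul_sum, ← mul_assoc (C _) (C _), ← C_mul]
  exact TendstoCoeff.sum _ fun k _ =>
    (TendstoCoeff.C (tendsto_scaled_coeff hasym γ k i j hb)).mul (TendstoCoeff.const _)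

lemma eventually_scaledPencil_eq_zero (hasym : HasAsymptotics 𝒜 a A) (γ : ℝ) (i j : Fin n)
    (hb : AhatMat A γ i j = ⊤) : ∀ᶠ ε in 𝓝[>] (0 : ℝ), scaledPencil 𝒜 γ ε i j = 0 := by
  rw [AhatMat, Finset.inf_eq_top_iff] at hb
  have hk (k : Fin (d + 1)) : ∀ᶠ ε in 𝓝[>] (0 : ℝ), 𝒜 ε k i j = 0 :=
    (hasym k i j).1 ((WithTop.add_eq_top.1 (hb k (Finset.mem_univ k))).resolve_right
      WithTop.coe_ne_top)
  filter_upwards [eventually_all.2 hk] with ε hε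
  simp [scaledPencil, hε]

/-- The determinant of the scaled pencil, divided by its expected order, converges to the
determinant of the auxiliary pencil. -/
lemma tendstoCoeff_det_scaledPencil (hn : 1 ≤ n) (hasym : HasAsymptotics 𝒜 a A) (γ : ℝ) {c : ℝ}
    (hc : mpPerm (AhatMat A γ) = (c : Rmin)) :
    TendstoCoeff (𝓝[>] (0 : ℝ)) (fun ε => C ((ε ^ (-c) : ℝ) : ℂ) * (scaledPencil 𝒜 γ ε).det)
      (auxPencil a (OptK A γ)).det := by
  classical
  rw [← Matrix.det_transpose, Matrix.det_apply']
  simp only [← Matrix.det_transpose (scaledPencil _ _ _), Matrix.det_apply', Finset.mul_sum,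
    mul_left_comm (C _), Matrix.transpose_apply]
  refine TendstoCoeff.sum _ fun σ _ => (TendstoCoeff.const _).mul ?_
  have hle : mpPerm (AhatMat A γ) ≤ ∑ i, AhatMat A γ i (σ i) :=
    Finset.inf_le (f := fun σ : Equiv.Perm (Fin n) => ∑ i, AhatMat A γ i (σ i))
      (Finset.mem_univ σ)
  have hzero (hσ : ∑ i, AhatMat A γ i (σ i) ≠ mpPerm (AhatMat A γ)) :
      ∏ i, auxPencil a (OptK A γ) i (σ i) = 0 := by
    obtain ⟨i, hi⟩ : ∃ i, ¬ OptArc (AhatMat A γ) i (σ i) := by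
      by_contra! h
      exact hσ (sum_eq_mpPerm_of_optArc hn _ (hc ▸ WithTop.coe_ne_top) σ h)
    refine Finset.prod_eq_zero (Finset.mem_univ i) ?_
    simp [auxPencil, restrictG, OptK, hi]
  by_cases htop : ∃ i, AhatMat A γ i (σ i) = ⊤
  · obtain ⟨i, hi⟩ := htop
    rw [hzero]
    · refine (TendstoCoeff.const 0).congr' ?_
      filter_upwards [eventually_scaledPencil_eq_zero hasym γ i (σ i) hi] with ε hε
      rw [Finset.prod_eq_zero (Finset.mem_univ i) hε, mul_zero]
    · rw [hc, WithTop.sum_eq_top.2 ⟨i, Finset.mem_univ i, hi⟩]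
      exact WithTop.top_ne_coe
  · push Not at htop
    choose b hb using fun i => WithTop.ne_top_iff_exists.1 (htop i)
    have hsum : ∑ i, AhatMat A γ i (σ i) = ((∑ i, b i : ℝ) : Rmin) := by
      rw [WithTop.coe_sum]
      exact Finset.sum_congr rfl fun i _ => (hb i).symm
    have hprod := TendstoCoeff.prod Finset.univ fun i _ =>
      tendstoCoeff_scaledPencil hasym γ i (σ i) (hb i).symm
    rw [hsum, hc, WithTop.coe_le_coe] at hle
    have hlim := (TendstoCoeff.C (tendsto_rpow_nhdsGT_zero (sub_nonneg.2 hle))).mul hprod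
    have hval : ∏ i, auxPencil a (OptK A γ) i (σ i) =
        C (if ∑ i, b i - c = 0 then 1 else 0) * ∏ i, ∑ k : Fin (d + 1),
          C (if A k i (σ i) + ((((k : ℕ) : ℝ) * γ : ℝ) : Rmin) = AhatMat A γ i (σ i)
            then a k i (σ i) else 0) * X ^ (k : ℕ) := by
      split_ifs with h
      · have hopt (i : Fin n) : OptArc (AhatMat A γ) i (σ i) :=
          ⟨σ, rfl, by rw [hsum, hc, sub_eq_zero.1 h]⟩
        simp [auxPencil, restrictG, OptK, hopt]
      · rw [hzero, C_0, zero_mul]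
        rw [hsum, hc]
        exact fun h' => h (sub_eq_zero.2 (WithTop.coe_inj.1 h'))
    rw [hval]
    refine hlim.congr' ?_
    filter_upwards [self_mem_nhdsWithin] with ε hε
    have hε : (0 : ℝ) < ε := hε
    rw [Finset.prod_mul_distrib, ← mul_assoc, ← map_prod, ← C_mul, ← Complex.ofReal_prod,
      ← Complex.ofReal_mul, ← Real.rpow_sum_of_pos hε, ← Real.rpow_add hε]
    congr 4
    rw [Finset.sum_neg_distrib]
    ring

end Scaling

/-- **Theorem 1 (first part, with `G_k = Opt_k(γ)`).**
Let `γ ∈ ℝ` be a finite corner of the min-plus characteristic polynomial `P_A` and let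
`a^{(γ)}` be the auxiliary pencil built with the graphs `G_k = Opt_k(γ)`.  If
`det a^{(γ)} ∈ ℂ[X]` has nonzero roots `λ_1, …, λ_m` (with multiplicity), then there are
`ε₀ > 0` and functions `L_1, …, L_m : (0, ε₀) → ℂ` such that for every `ε ∈ (0, ε₀)` the
multiset `{L_1 ε, …, L_m ε}` is a sub-multiset of the roots of `det 𝒜_ε` (with
multiplicity), and `ε^{-γ} L_i ε → λ_i` as `ε → 0⁺`; i.e. `𝒜_ε` has `m` eigenvalues with
asymptotic equivalents `λ_i ε^γ`. -/
theorem mainTheorem_opt_part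
    (n d : ℕ) (hn : 1 ≤ n)
    (𝒜 : ℝ → Fin (d + 1) → Matrix (Fin n) (Fin n) ℂ)
    (a : Fin (d + 1) → Matrix (Fin n) (Fin n) ℂ)
    (A : Fin (d + 1) → Matrix (Fin n) (Fin n) Rmin)
    (hcont : ∀ k i j, ContinuousOn (fun ε : ℝ => 𝒜 ε k i j) (Set.Ioi 0))
    (hasym : HasAsymptotics 𝒜 a A)
    (γ : ℝ) (hγ : IsFiniteCorner A γ)
    (m : ℕ) (lam : Fin m → ℂ)
    (hlam : ((auxPencil a (OptK A γ)).det.roots.filter (· ≠ 0)) =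
      Multiset.map lam Finset.univ.val) :
    ∃ ε₀ > (0 : ℝ), ∃ L : Fin m → ℝ → ℂ,
      (∀ ε ∈ Set.Ioo (0 : ℝ) ε₀,
        Multiset.map (fun i => L i ε) Finset.univ.val ≤ (pencilPoly 𝒜 ε).roots) ∧
      ∀ i, Tendsto (fun ε : ℝ => ((ε ^ (-γ) : ℝ) : ℂ) * L i ε) (𝓝[>] (0 : ℝ))
        (𝓝 (lam i)) := by
  obtain ⟨m₁, hm₁, -⟩ := hγ
  obtain ⟨c, hc⟩ := WithTop.ne_top_iff_exists.1
    (mpPerm_AhatMat_ne_top A γ (Finset.mem_filter.1 hm₁).2.1)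
  by_cases hg0 : (auxPencil a (OptK A γ)).det = 0
  · have hm : m = 0 := by simpa [hg0] using (congrArg Multiset.card hlam).symm
    subst hm
    exact ⟨1, one_pos, fun i => i.elim0, by simp, fun i => i.elim0⟩
  obtain ⟨L, hL, hLlim⟩ := (tendstoCoeff_det_scaledPencil hn hasym γ hc.symm).exists_tendsto_roots
    (N := n * d) lam
    (fun ε => (natDegree_C_mul_le _ _).trans (natDegree_det_le_of_entries _ fun i j =>
      natDegree_sum_C_mul_X_pow_le _))
    (natDegree_det_le_of_entries _ fun i j => natDegree_sum_C_mul_X_pow_le _) hg0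
    (hlam ▸ Multiset.filter_le _ _)
  obtain ⟨ε₀, hε₀, hsub⟩ := mem_nhdsGT_iff_exists_Ioo_subset.1 hL
  refine ⟨ε₀, hε₀, fun i ε => ((ε ^ γ : ℝ) : ℂ) * L i ε, fun ε hε => ?_, fun i => ?_⟩
  · have hpos (s : ℝ) : ((ε ^ s : ℝ) : ℂ) ≠ 0 := by
      exact_mod_cast (Real.rpow_pos_of_pos hε.1 s).ne'
    have hle : Multiset.map (fun i => L i ε) Finset.univ.val ≤ (scaledPencil 𝒜 γ ε).det.roots := by
      rw [← roots_C_mul _ (hpos (-c))]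
      exact hsub hε
    have hroots := map_roots_comp_C_mul_X_add_C (pencilPoly 𝒜 ε) _ 0 (hpos γ).isUnit
    simp only [C_0, add_zero, pencilPoly_comp] at hroots
    rw [← hroots]
    simpa [Multiset.map_map, Function.comp_def] using
      Multiset.map_le_map (f := fun x => ((ε ^ γ : ℝ) : ℂ) * x) hle
  · refine (hLlim i).congr' ?_
    filter_upwards [self_mem_nhdsWithin] with ε hε
    have hε : (0 : ℝ) < ε := hε
    rw [← mul_assoc, ← Complex.ofReal_mul, ← Real.rpow_add hε]
    simp
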